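/- Let H ⊆ binom([n],3) be a 2-resilient 3-graph with matching number 2, and let A, B ∈ H be disjoint edges. Then the number of edges T ∈ H with T ∩ A ≠ ∅ and T ∩ B ≠ ∅ is at most 36. -/

import Mathlib

/-- The matching number of a hypergraph: the largest size of a set of
pairwise disjoint edges. -/
noncomputable def matchingNumber (H : Finset (Finset ℕ)) : ℕ :=
  sSup {m | ∃ M : Finset (Finset ℕ), M ⊆ H ∧ M.card = m ∧
    (M : Set (Finset ℕ)).PairwiseDisjoint id}

/-- A hypergraph is `t`-resilient if deleting any set of at most `t`
vertices does not decrease its matching number. -/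
def Resilient (t : ℕ) (H : Finset (Finset ℕ)) : Prop :=
  ∀ T : Finset ℕ, T.card ≤ t →
    matchingNumber (H.filter fun F => Disjoint F T) = matchingNumber H

/-- `S 0, …, S (r-1)` form a pseudo sunflower with center `C`:
the `S i` are distinct, `C` is a proper subset of one of them, and the
sets `S i \ C` are pairwise disjoint. -/
def IsPseudoSunflower {r : ℕ} (S : Fin r → Finset ℕ) (C : Finset ℕ) : Prop :=
  Function.Injective S ∧ (∃ i, C ⊂ S i) ∧
    ∀ i j, i ≠ j → Disjoint (S i \ C) (S j \ C)

/-- The covering (transversal) number of a hypergraph. -/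
noncomputable def coverNumber (H : Finset (Finset ℕ)) : ℕ :=
  sInf {m | ∃ Y : Finset ℕ, Y.card = m ∧ ∀ F ∈ H, (F ∩ Y).Nonempty}

/-!
Fix a maximum matching `{A, B}` and put `U = A ∪ B`. Charge every edge meeting both `A` and `B` to
the pairs in `A × B` it contains, with weight `1` if it lies inside `U` (it then contains two such
pairs) and weight `2` otherwise, so that it is charged at least `2` in total. It remains to bound
the total charge by `72`, and as `K₃,₃` splits into three perfect matchings, it is enough that
every perfect matching `P₀, P₁, P₂` of pairs receives at most `24`.

By resilience there is a maximum matching avoiding `Pᵢ`; its six vertices contain the link of `Pᵢ`,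
and at least two of them lie in `U`. So at most four vertices of the link lie outside `U`, and `Pᵢ`
receives at most `10`. The parts of the three links outside `U` have no system of distinct
representatives, as it would give three disjoint edges. By Hall's theorem some `k ≥ 1` of these
parts have fewer than `k` elements each, so that each of these `k` pairs receives at most
`2 (k - 1) + 4`, the link having at most four vertices in `U`. This leaves a total of at most
`k (2 k + 2) + 10 (3 - k) ≤ 24`.
-/

open Finset Function

lemma sum_sum_le_card_nsmul_of_equiv {ι κ R : Type*} [AddCommMonoid R] [PartialOrder R]
    [IsOrderedAddMonoid R] {A : Finset ι} {B : Finset κ} (h : #A = #B) {f : ι → κ → R} {c : R}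
    (hf : ∀ e : A ≃ B, ∑ a : A, f a (e a) ≤ c) : ∑ a ∈ A, ∑ b ∈ B, f a b ≤ #A • c := by
  obtain rfl | hA := A.eq_empty_or_nonempty
  · simp
  have : NeZero #A := ⟨hA.card_ne_zero⟩
  let u : A ≃ Fin #A := A.equivFin
  let v : Fin #A ≃ B := (B.equivFinOfCardEq h.symm).symm
  -- The translations of the cyclic group `Fin #A` partition `A ×ˢ B` into `#A` bijections.
  calc ∑ a ∈ A, ∑ b ∈ B, f a b
    _ = ∑ a : A, ∑ b : B, f a b := by simp only [← sum_coe_sort A, ← sum_coe_sort B]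
    _ = ∑ a : A, ∑ k, f a (v (u a + k)) :=
      sum_congr rfl fun a _ ↦ (((Equiv.addLeft (u a)).trans v).sum_comp fun b : B ↦ f a b).symm
    _ = ∑ k, ∑ a : A, f a (v (u a + k)) := sum_comm
    _ ≤ #(univ : Finset (Fin #A)) • c :=
      sum_le_card_nsmul _ _ _ fun k _ ↦ hf ((u.trans (Equiv.addRight k)).trans v)
    _ = #A • c := by rw [card_univ, Fintype.card_fin]

lemma exists_nonempty_forall_card_lt_of_not_exists_injective {ι α : Type*}
    {t : ι → Finset α} (h : ¬∃ x : ι → α, Injective x ∧ ∀ i, x i ∈ t i) :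
    ∃ s : Finset ι, s.Nonempty ∧ ∀ i ∈ s, #(t i) < #s := by
  classical
  rw [← all_card_le_biUnion_card_iff_exists_injective] at h
  push Not at h
  obtain ⟨s, hs⟩ := h
  exact ⟨s, card_pos.1 (by lia),
    fun i hi ↦ (card_le_card (subset_biUnion_of_mem t hi)).trans_lt hs⟩

variable {α : Type*} {H H' M : Finset (Finset α)} {P T U : Finset α} {r : ℕ}

/-- `IsMatching H M` says that `M` is a matching in the hypergraph `H`, i.e. a set of pairwise
disjoint edges. -/
structure IsMatching (H M : Finset (Finset α)) : Prop where
  subset : M ⊆ H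
  pairwiseDisjoint : (M : Set (Finset α)).PairwiseDisjoint id

namespace IsMatching

lemma mono (hM : IsMatching H M) (h : H ⊆ H') : IsMatching H' M :=
  ⟨hM.subset.trans h, hM.pairwiseDisjoint⟩

variable [DecidableEq α]

lemma pair {A B : Finset α} (hA : A ∈ H) (hB : B ∈ H) (hAB : Disjoint A B) :
    IsMatching H {A, B} where
  subset := insert_subset hA (singleton_subset_iff.2 hB)
  pairwiseDisjoint := by
    rw [coe_pair]
    exact Set.pairwise_pair.2 fun _ ↦ ⟨hAB, hAB.symm⟩

lemma image {ι : Type*} [Fintype ι] {f : ι → Finset α} (hf : ∀ i, f i ∈ H)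
    (hd : Pairwise (Disjoint on f)) : IsMatching H (univ.image f) where
  subset := image_subset_iff.2 fun i _ ↦ hf i
  pairwiseDisjoint := by
    rw [coe_image]
    rintro _ ⟨i, -, rfl⟩ _ ⟨j, -, rfl⟩ hij
    exact hd (ne_of_apply_ne f hij)

lemma card_biUnion (hM : IsMatching H M) (hH : (H : Set (Finset α)).Sized r) :
    #(M.biUnion id) = #M * r := by
  rw [Finset.card_biUnion hM.pairwiseDisjoint]
  exact sum_const_nat fun E hE ↦ hH (hM.subset hE)

lemma card_le_card_biUnion_inter (hM : IsMatching H M) (hU : ∀ E ∈ H, ¬Disjoint E U) :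
    #M ≤ #(M.biUnion id ∩ U) := by
  rw [biUnion_inter]
  exact card_le_card_biUnion
    (hM.pairwiseDisjoint.mono fun _ ↦ inter_subset_left)
    fun E hE ↦ not_disjoint_iff_nonempty_inter.1 (hU E (hM.subset hE))

lemma not_disjoint_biUnion (hM : IsMatching H M) (hmax : ∀ M', IsMatching H M' → #M' ≤ #M)
    (hT : T ∈ H) (hT₀ : T.Nonempty) : ¬Disjoint T (M.biUnion id) := by
  rw [disjoint_biUnion_right]
  intro hd
  have hTM : T ∉ M := fun h ↦ hT₀.ne_empty (disjoint_self.1 (hd T h))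
  have hins : IsMatching H (insert T M) :=
    ⟨insert_subset hT hM.subset, by
      rw [coe_insert]
      exact hM.pairwiseDisjoint.insert fun E hE _ ↦ hd E hE⟩
  have := hmax _ hins
  rw [card_insert_of_notMem hTM] at this
  lia

end IsMatching

variable [DecidableEq α]

/-- The set of vertices completing `P` to an edge of `H`; for an `r`-uniform hypergraph and
`#P = r - 1` this is the link of `P`. -/
def link (H : Finset (Finset α)) (P : Finset α) : Finset α :=
  {x ∈ H.biUnion id | x ∉ P ∧ insert x P ∈ H}

lemma mem_link {x : α} : x ∈ link H P ↔ x ∉ P ∧ insert x P ∈ H := by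
  simp only [link, mem_filter, mem_biUnion, id_eq, and_iff_right_iff_imp]
  exact fun h ↦ ⟨_, h.2, mem_insert_self x P⟩

lemma link_subset_biUnion (hM : IsMatching {E ∈ H | Disjoint E P} M)
    (hmax : ∀ M', IsMatching H M' → #M' ≤ #M) : link H P ⊆ M.biUnion id := by
  intro x hx
  have hP : Disjoint P (M.biUnion id) :=
    (disjoint_biUnion_right _ _ _).2 fun E hE ↦ (mem_filter.1 (hM.subset hE)).2.symm
  have := (hM.mono (filter_subset _ _)).not_disjoint_biUnion hmax (mem_link.1 hx).2
    (insert_nonempty x P)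
  by_contra hxM
  exact this (disjoint_insert_left.2 ⟨hxM, hP⟩)

lemma card_link_le (hH : (H : Set (Finset α)).Sized r) (hM : IsMatching {E ∈ H | Disjoint E P} M)
    (hmax : ∀ M', IsMatching H M' → #M' ≤ #M) : #(link H P) ≤ #M * r :=
  (card_le_card (link_subset_biUnion hM hmax)).trans_eq
    ((hM.mono (filter_subset _ _)).card_biUnion hH)

lemma card_add_card_link_sdiff_le (hH : (H : Set (Finset α)).Sized r)
    (hM : IsMatching {E ∈ H | Disjoint E P} M) (hmax : ∀ M', IsMatching H M' → #M' ≤ #M)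
    (hU : ∀ E ∈ H, ¬Disjoint E U) : #M + #(link H P \ U) ≤ #M * r := by
  have hMH : IsMatching H M := hM.mono (filter_subset _ _)
  calc #M + #(link H P \ U)
    _ ≤ #(M.biUnion id ∩ U) + #(M.biUnion id \ U) :=
      add_le_add (hMH.card_le_card_biUnion_inter hU)
        (card_le_card (sdiff_subset_sdiff (link_subset_biUnion hM hmax) subset_rfl))
    _ = #M * r := by rw [card_inter_add_card_sdiff, hMH.card_biUnion hH]

lemma card_add_card_link_inter_le (hPU : P ⊆ U) : #P + #(link H P ∩ U) ≤ #U := by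
  have hd : Disjoint P (link H P ∩ U) :=
    disjoint_right.2 fun x hx ↦ (mem_link.1 (mem_inter.1 hx).1).1
  rw [← card_union_of_disjoint hd]
  exact card_le_card (union_subset hPU inter_subset_right)

lemma exists_isMatching_of_injective_mem_link {ι : Type*} [Fintype ι] {P : ι → Finset α}
    (hPU : ∀ i, P i ⊆ U) (hP : Pairwise (Disjoint on P)) {x : ι → α} (hx : Injective x)
    (hxP : ∀ i, x i ∈ link H (P i) \ U) : ∃ M, IsMatching H M ∧ #M = Fintype.card ι := by
  let f : ι → Finset α := fun i ↦ insert (x i) (P i)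
  have hxU (i j : ι) : x i ∉ P j := fun h ↦ (mem_sdiff.1 (hxP i)).2 (hPU j h)
  have hd : Pairwise (Disjoint on f) := fun i j hij ↦ by
    simp only [f, onFun, disjoint_insert_left, disjoint_insert_right, mem_insert, not_or]
    exact ⟨⟨hx.ne hij.symm, hxU j i⟩, hxU i j, hP hij⟩
  have hf : Injective f := fun i j hij ↦ by
    by_contra hne
    have := hd hne
    rw [onFun, hij, disjoint_self] at this
    exact (insert_ne_empty _ _) this
  exact ⟨univ.image f, .image (fun i ↦ (mem_link.1 (mem_sdiff.1 (hxP i)).1).2) hd,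
    card_image_of_injective _ hf⟩

lemma sum_superset_eq_sum_link {R : Type*} [AddCommMonoid R]
    (hH : (H : Set (Finset α)).Sized (#P + 1)) (f : Finset α → R) :
    ∑ T ∈ H with P ⊆ T, f T = ∑ x ∈ link H P, f (insert x P) := by
  symm
  refine sum_bij (fun x _ ↦ insert x P) ?_ ?_ ?_ fun _ _ ↦ rfl
  · exact fun x hx ↦ mem_filter.2 ⟨(mem_link.1 hx).2, subset_insert x P⟩
  · exact fun x hx y _ hxy ↦ (insert_inj (mem_link.1 hx).1).1 hxy
  · intro T hT
    obtain ⟨hTH, hPT⟩ := mem_filter.1 hT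
    obtain ⟨x, hx, rfl⟩ := exists_eq_insert_iff.2 ⟨hPT, (hH hTH).symm⟩
    exact ⟨x, mem_link.2 ⟨hx, hTH⟩, rfl⟩

/-- The charge of an edge `T` to each of the pairs it contains. For `U = A ∪ B` it is chosen so that
a triple meeting both `A` and `B` spends at least `2` on the pairs in `A × B`. -/
def edgeWeight (U T : Finset α) : ℕ := if T ⊆ U then 1 else 2

/-- The total charge that the vertex set `P` receives from the edges of `H` containing it. -/
def pairWeight (H : Finset (Finset α)) (U P : Finset α) : ℕ := ∑ T ∈ H with P ⊆ T, edgeWeight U T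

lemma pairWeight_eq (hH : (H : Set (Finset α)).Sized (#P + 1)) (hPU : P ⊆ U) :
    pairWeight H U P = #(link H P) + #(link H P \ U) := by
  have hw (x : α) : edgeWeight U (insert x P) = 1 + if x ∉ U then 1 else 0 := by
    simp only [edgeWeight, insert_subset_iff, hPU, and_true]
    split_ifs <;> rfl
  rw [pairWeight, sum_superset_eq_sum_link hH]
  simp only [hw, sum_add_distrib, sum_const, smul_eq_mul, mul_one,
    ← card_filter, filter_notMem_eq_sdiff]

lemma sum_pairWeight_eq (H : Finset (Finset α)) (U A B : Finset α) :
    ∑ a ∈ A, ∑ b ∈ B, pairWeight H U {a, b} =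
      ∑ T ∈ H, #(T ∩ A) * #(T ∩ B) * edgeWeight U T := by
  have hpairs (T : Finset α) :
      {p ∈ A ×ˢ B | ({p.1, p.2} : Finset α) ⊆ T} = (T ∩ A) ×ˢ (T ∩ B) := by grind
  simp only [pairWeight, sum_filter]
  rw [← sum_product', sum_comm]
  refine sum_congr rfl fun T _ ↦ ?_
  rw [← sum_filter, hpairs, sum_const, card_product, smul_eq_mul]

lemma two_le_card_inter_mul_card_inter_mul_edgeWeight {A B : Finset α} (hAB : Disjoint A B)
    (hT : #T = 3) (hA : (T ∩ A).Nonempty) (hB : (T ∩ B).Nonempty) :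
    2 ≤ #(T ∩ A) * #(T ∩ B) * edgeWeight (A ∪ B) T := by
  have hA₁ : 0 < #(T ∩ A) := hA.card_pos
  have hB₁ : 0 < #(T ∩ B) := hB.card_pos
  unfold edgeWeight
  split_ifs with hTU
  · have hsum : #(T ∩ A) + #(T ∩ B) = 3 := by
      rw [← card_union_of_disjoint (hAB.mono inter_subset_right inter_subset_right),
        ← inter_union_distrib_left, inter_eq_left.2 hTU, hT]
    nlinarith
  · have := Nat.mul_pos hA₁ hB₁
    lia

lemma two_mul_card_le_sum_pairWeight {A B : Finset α} (hH : (H : Set (Finset α)).Sized 3)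
    (hAB : Disjoint A B) :
    2 * #{T ∈ H | (T ∩ A).Nonempty ∧ (T ∩ B).Nonempty} ≤
      ∑ a ∈ A, ∑ b ∈ B, pairWeight H (A ∪ B) {a, b} := by
  rw [sum_pairWeight_eq, mul_comm, ← smul_eq_mul]
  refine (card_nsmul_le_sum _ _ 2 fun T hT ↦ ?_).trans (sum_le_sum_of_subset (filter_subset _ _))
  obtain ⟨hTH, hTA, hTB⟩ := mem_filter.1 hT
  exact two_le_card_inter_mul_card_inter_mul_edgeWeight hAB (hH hTH) hTA hTB

lemma pairWeight_le_two_mul_card_link_sdiff_add_four (hH : (H : Set (Finset α)).Sized 3)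
    (hU : #U = 6) (hPU : P ⊆ U) (hP : #P = 2) : pairWeight H U P ≤ 2 * #(link H P \ U) + 4 := by
  have := card_add_card_link_inter_le (H := H) hPU
  have := card_inter_add_card_sdiff (link H P) U
  rw [pairWeight_eq (hP ▸ hH) hPU]
  lia

lemma pairWeight_le_ten (hH : (H : Set (Finset α)).Sized 3)
    (hν : ∀ M, IsMatching H M → #M ≤ 2) (hU : ∀ E ∈ H, ¬Disjoint E U) (hPU : P ⊆ U)
    (hP : #P = 2) (hres : ∃ M, IsMatching {E ∈ H | Disjoint E P} M ∧ #M = 2) :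
    pairWeight H U P ≤ 10 := by
  obtain ⟨M, hM, hM2⟩ := hres
  have hmax (M') (hM' : IsMatching H M') : #M' ≤ #M := hM2 ▸ hν M' hM'
  have hlink : #(link H P) ≤ #M * 3 := card_link_le hH hM hmax
  have hout : #M + #(link H P \ U) ≤ #M * 3 := card_add_card_link_sdiff_le hH hM hmax hU
  rw [pairWeight_eq (hP ▸ hH) hPU]
  lia

lemma sum_pairWeight_le {ι : Type*} [Fintype ι] (hι : Fintype.card ι = 3)
    (hH : (H : Set (Finset α)).Sized 3) (hν : ∀ M, IsMatching H M → #M ≤ 2)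
    (hU : ∀ E ∈ H, ¬Disjoint E U) (hU6 : #U = 6) {P : ι → Finset α} (hPU : ∀ i, P i ⊆ U)
    (hP2 : ∀ i, #(P i) = 2) (hP : Pairwise (Disjoint on P))
    (hres : ∀ i, ∃ M, IsMatching {E ∈ H | Disjoint E (P i)} M ∧ #M = 2) :
    ∑ i, pairWeight H U (P i) ≤ 24 := by
  classical
  have hsdr : ¬∃ x : ι → α, Injective x ∧ ∀ i, x i ∈ link H (P i) \ U := by
    rintro ⟨x, hx, hxP⟩
    obtain ⟨M, hM, hM3⟩ := exists_isMatching_of_injective_mem_link hPU hP hx hxP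
    have := hν M hM
    lia
  obtain ⟨s, hs, hlt⟩ := exists_nonempty_forall_card_lt_of_not_exists_injective hsdr
  have hle : ∀ i ∈ s, pairWeight H U (P i) ≤ 2 * #s + 2 := fun i hi ↦ by
    have := pairWeight_le_two_mul_card_link_sdiff_add_four hH hU6 (hPU i) (hP2 i)
    have := hlt i hi
    lia
  have hle' : ∀ i ∈ sᶜ, pairWeight H U (P i) ≤ 10 := fun i _ ↦
    pairWeight_le_ten hH hν hU (hPU i) (hP2 i) (hres i)
  have hcompl : #s + #sᶜ = 3 := by rw [card_add_card_compl, hι]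
  have hpos : 0 < #s := hs.card_pos
  calc ∑ i, pairWeight H U (P i)
    _ = ∑ i ∈ s, pairWeight H U (P i) + ∑ i ∈ sᶜ, pairWeight H U (P i) :=
      (sum_add_sum_compl s _).symm
    _ ≤ #s • (2 * #s + 2) + #sᶜ • 10 :=
      add_le_add (sum_le_card_nsmul _ _ _ hle) (sum_le_card_nsmul _ _ _ hle')
    _ ≤ 24 := by
      have : #s ≤ 3 := by lia
      interval_cases #s <;> simp only [smul_eq_mul] <;> lia

lemma not_disjoint_union_of_forall_card_le_two {A B : Finset α} (hH : ∀ E ∈ H, E.Nonempty)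
    (hν : ∀ M, IsMatching H M → #M ≤ 2) (hA : A ∈ H) (hB : B ∈ H) (hAB : Disjoint A B)
    (hT : T ∈ H) : ¬Disjoint T (A ∪ B) := by
  have hcard : #{A, B} = 2 := card_pair (hAB.ne (hH A hA).ne_empty)
  have := (IsMatching.pair hA hB hAB).not_disjoint_biUnion (hcard ▸ hν) hT (hH T hT)
  rwa [biUnion_insert, singleton_biUnion] at this

lemma pairwise_disjoint_pair {A B : Finset α} (hAB : Disjoint A B) {f : A → B}
    (hf : Injective f) : Pairwise (Disjoint on fun a : A ↦ ({↑a, ↑(f a)} : Finset α)) := by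
  intro a a' haa'
  have hfaa' : (f a : α) ≠ f a' := Subtype.coe_ne_coe.2 (hf.ne haa')
  have hne (x : A) (y : B) : (x : α) ≠ y := disjoint_iff_ne.1 hAB x x.2 y y.2
  simp only [onFun, disjoint_insert_left, disjoint_singleton_left, mem_insert, mem_singleton,
    not_or]
  exact ⟨⟨Subtype.coe_ne_coe.2 haa', hne _ _⟩, (hne _ _).symm, hfaa'⟩

theorem stmt11_general {α : Type*} [DecidableEq α] {H : Finset (Finset α)}
    (hH : (H : Set (Finset α)).Sized 3) (hν : ∀ M, IsMatching H M → #M ≤ 2)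
    {A B : Finset α} (hA : A ∈ H) (hB : B ∈ H) (hAB : Disjoint A B)
    (hres : ∀ a ∈ A, ∀ b ∈ B, ∃ M, IsMatching {E ∈ H | Disjoint E {a, b}} M ∧ #M = 2) :
    #{T ∈ H | (T ∩ A).Nonempty ∧ (T ∩ B).Nonempty} ≤ 36 := by
  have hU : ∀ E ∈ H, ¬Disjoint E (A ∪ B) := fun E ↦
    not_disjoint_union_of_forall_card_le_two
      (fun F hF ↦ card_pos.1 (by rw [hH hF]; exact three_pos)) hν hA hB hAB
  have hU6 : #(A ∪ B) = 6 := by rw [card_union_of_disjoint hAB, hH hA, hH hB]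
  have hmatching (e : A ≃ B) : ∑ a : A, pairWeight H (A ∪ B) {↑a, ↑(e a)} ≤ 24 :=
    sum_pairWeight_le (by rw [Fintype.card_coe, hH hA]) hH hν hU hU6
      (fun a ↦ insert_subset (mem_union_left _ a.2)
        (singleton_subset_iff.2 (mem_union_right _ (e a).2)))
      (fun a ↦ card_pair (disjoint_iff_ne.1 hAB a a.2 (e a) (e a).2))
      (pairwise_disjoint_pair hAB e.injective) fun a ↦ hres a a.2 (e a) (e a).2
  have htotal : ∑ a ∈ A, ∑ b ∈ B, pairWeight H (A ∪ B) {a, b} ≤ #A • 24 :=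
    sum_sum_le_card_nsmul_of_equiv ((hH hA).trans (hH hB).symm) hmatching
  have hcharge := two_mul_card_le_sum_pairWeight hH hAB
  rw [hH hA, smul_eq_mul] at htotal
  lia

lemma bddAbove_card_isMatching (H : Finset (Finset ℕ)) :
    BddAbove {m | ∃ M ⊆ H, #M = m ∧ (M : Set (Finset ℕ)).PairwiseDisjoint id} :=
  ⟨#H, by rintro _ ⟨M, hM, rfl, -⟩; exact card_le_card hM⟩

lemma IsMatching.card_le_matchingNumber {H M : Finset (Finset ℕ)} (hM : IsMatching H M) :
    #M ≤ matchingNumber H :=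
  le_csSup (bddAbove_card_isMatching H) ⟨M, hM.subset, rfl, hM.pairwiseDisjoint⟩

lemma exists_isMatching_card_eq_matchingNumber (H : Finset (Finset ℕ)) :
    ∃ M, IsMatching H M ∧ #M = matchingNumber H := by
  obtain ⟨M, hMH, hcard, hM⟩ := Nat.sSup_mem
    (s := {m | ∃ M ⊆ H, #M = m ∧ (M : Set (Finset ℕ)).PairwiseDisjoint id}) ⟨0, ∅, by simp⟩
    (bddAbove_card_isMatching H)
  exact ⟨M, ⟨hMH, hM⟩, hcard⟩

/-- In a 2-resilient 3-graph with matching number 2, for disjoint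
edges `A, B ∈ H` at most 36 edges meet both `A` and `B`. -/
theorem stmt11 (n : ℕ) (H : Finset (Finset ℕ))
    (hH : H ⊆ (Finset.range n).powersetCard 3)
    (hres : Resilient 2 H) (hν : matchingNumber H = 2)
    (A B : Finset ℕ) (hA : A ∈ H) (hB : B ∈ H) (hAB : Disjoint A B) :
    (H.filter fun T => (T ∩ A).Nonempty ∧ (T ∩ B).Nonempty).card ≤ 36 := by
  refine stmt11_general (fun E hE ↦ (mem_powersetCard.1 (hH hE)).2)
    (fun M hM ↦ hν ▸ hM.card_le_matchingNumber) hA hB hAB fun a _ b _ ↦ ?_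
  rw [← hν, ← hres {a, b} card_le_two]
  exact exists_isMatching_card_eq_matchingNumber _
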